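/- arXiv:1609.04271 — 2 statements merged into one kernel-verified Lean document; each statement's English description precedes it below -/
import Mathlib

section
/- Let x, y ∈ Ω with (x₁, y₁) ∈ {(3,4),(4,3)}. Then π_E(x) ≠ π_E(y), π_F(g(x)) ≠ π_F(g(y)), and setting n = Λ_E(x,y) one has n ≥ 1 and n − 1 ≤ Λ_F(g(x),g(y)) ≤ n + 2. -/
/-!
Two level-`n` cells of a fractal square with contraction ratio `1/3` meet if and only if the
attractor `K` meets its translate by the integer vector `D n` that separates the two cells after
rescaling by `3^n` (`meets_iff`), and `D (n+1) = 3 D n + d(y_n) - d(x_n)`.  Since `K ⊆ [0,1]²`,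
only vectors with entries in `{-1,0,1}` matter, and finite checks on the digits show:

* for `E`, the diagonal translates miss `E`, while `E ∩ (E + i)` is nonempty and can be followed
  only through the letters `5` (below) and `2` (above).  Hence for `x₁ = 3`, `y₁ = 4` the cells meet
  at level `n ≥ 1` exactly when `x₁⋯x_n = 35^{n-1}` and `y₁⋯y_n = 42^{n-1}`
  (`meetsE_forces`, `meetsE_of`);
* for `F`, all translates with nonzero horizontal part miss `F`, so after a common prefix the
  letters `4` and `5` separate from all others at once (`sepF_col`), and a `2` followed by `2` or `5`
  separates from any other letter after at most one more step (`sepF_two`).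

Write `x = 35^a c'⋯` with `c' ≠ 5` and `y = 42^b c⋯` with `c ≠ 2`, so that `Λ_E(x,y) = 1 + min a b`.
The first segments of `x` and `y` are then known, so `g(x)` and `g(y)` are known up to the position
where they first differ (`gRel_three_pos`, `gRel_four_five`, `gRel_four_plain`, …).  A comparison of
the possible cases gives a common prefix of length at least `min a b` and separation at level at
most `min a b + 3` (`core`).
-/

open MeasureTheory

noncomputable section

/-- The alphabet `{1,…,5}`, encoded as `Fin 5` (letter `k` is index `k-1`). -/
abbrev Letter := Fin 5

/-- The letter `1`. -/
def l1 : Letter := 0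
/-- The letter `2`. -/
def l2 : Letter := 1
/-- The letter `3`. -/
def l3 : Letter := 2
/-- The letter `4`. -/
def l4 : Letter := 3
/-- The letter `5`. -/
def l5 : Letter := 4

/-- The digit set of `E`: `(d_1,…,d_5) = (0, 1, 2, 2+i, 1+2i)`. -/
def dE : Letter → ℂ := ![0, 1, 2, 2 + Complex.I, 1 + 2 * Complex.I]

/-- The digit set of `F`: `(e_1,…,e_5) = (1+2i, 1+i, 1, 0, 2+i)`. -/
def dF : Letter → ℂ := ![1 + 2 * Complex.I, 1 + Complex.I, 1, 0, 2 + Complex.I]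

/-- The map `φ^E_j(z) = (z + d_j)/3`. -/
def phiE (j : Letter) (z : ℂ) : ℂ := (z + dE j) / 3

/-- The map `φ^F_j(z) = (z + e_j)/3`. -/
def phiF (j : Letter) (z : ℂ) : ℂ := (z + dF j) / 3

/-- For a finite word `w = w_1⋯w_n`, the composition `φ_{w_1} ∘ ⋯ ∘ φ_{w_n}`
(the empty word gives the identity). -/
def iterPhi (φ : Letter → ℂ → ℂ) : List Letter → ℂ → ℂ
  | [] => id
  | j :: w => φ j ∘ iterPhi φ w

/-- `K` is the attractor of the IFS `{φ_j}`: the (unique) nonempty compact set with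
`K = ⋃_j φ_j(K)`. -/
def IsAttractor (φ : Letter → ℂ → ℂ) (K : Set ℂ) : Prop :=
  K.Nonempty ∧ IsCompact K ∧ K = ⋃ j, φ j '' K

/-- The prefix `x_1⋯x_n` of the sequence `x`. -/
def preWord (x : ℕ → Letter) (n : ℕ) : List Letter := List.ofFn fun i : Fin n => x i

/-- The factor `x_{j+1}⋯x_{j+L}` of `x` (`j` entries skipped, length `L`). -/
def fword (x : ℕ → Letter) (j L : ℕ) : List Letter := List.ofFn fun i : Fin L => x (j + i)

/-- `p = π_K(x)`, i.e. `p` is the point of `⋂_{n≥1} φ_{x_1⋯x_n}(K)`. -/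
def codes (φ : Letter → ℂ → ℂ) (K : Set ℂ) (x : ℕ → Letter) (p : ℂ) : Prop :=
  ∀ n, p ∈ iterPhi φ (preWord x n) '' K

/-- `Ω`: the sequences that are eventually constant equal to the letter `4`. -/
def OmegaSeq : Set (ℕ → Letter) := {x | ∃ N, ∀ n, N ≤ n → x n = l4}

/-- `Λ(x,y) = n`: the separation number of `(x,y)` for the IFS `φ` with attractor `K`
is `n`, i.e. `n` is the largest integer with `φ_{x_1⋯x_n}(K) ∩ φ_{y_1⋯y_n}(K) ≠ ∅`. -/
def SepNum (φ : Letter → ℂ → ℂ) (K : Set ℂ) (x y : ℕ → Letter) (n : ℕ) : Prop :=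
  (iterPhi φ (preWord x n) '' K ∩ iterPhi φ (preWord y n) '' K).Nonempty ∧
    ∀ m, n < m → iterPhi φ (preWord x m) '' K ∩ iterPhi φ (preWord y m) '' K = ∅

/-- The factor of `x` starting at position `j` (0-indexed) of length `L` is an
`E`-special segment: either `35^k` followed by a letter `≠ 5` (so `L = k+1`, `k ≥ 1`),
or `42^{k-1}5` (so `L = k+1`, `k ≥ 1`). -/
def ESpecial (x : ℕ → Letter) (j L : ℕ) : Prop :=
  (2 ≤ L ∧ x j = l3 ∧ (∀ i, 1 ≤ i → i < L → x (j + i) = l5) ∧ x (j + L) ≠ l5) ∨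
  (2 ≤ L ∧ x j = l4 ∧ (∀ i, 1 ≤ i → i < L - 1 → x (j + i) = l2) ∧ x (j + L - 1) = l5)

/-- The entry of `x` at position `j` is an `E`-plain segment: it belongs to no
`E`-special segment of `x`. -/
def EPlain (x : ℕ → Letter) (j : ℕ) : Prop :=
  ∀ p L, ESpecial x p L → ¬(p ≤ j ∧ j < p + L)

/-- An `E`-segment: an `E`-special segment, or a single `E`-plain entry. -/
def ESegment (x : ℕ → Letter) (j L : ℕ) : Prop :=
  ESpecial x j L ∨ (L = 1 ∧ EPlain x j)

/-- The factor of `u` starting at position `j` of length `L` is an `F`-special segment: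
`42^m5` followed by a letter `≠ 5` (`L = m+2`, `m ≥ 0`), or `42^m55` (`L = m+3`, `m ≥ 0`),
or `35` (`L = 2`). -/
def FSpecial (u : ℕ → Letter) (j L : ℕ) : Prop :=
  (2 ≤ L ∧ u j = l4 ∧ (∀ i, 1 ≤ i → i < L - 1 → u (j + i) = l2) ∧
    u (j + L - 1) = l5 ∧ u (j + L) ≠ l5) ∨
  (3 ≤ L ∧ u j = l4 ∧ (∀ i, 1 ≤ i → i < L - 2 → u (j + i) = l2) ∧
    u (j + L - 2) = l5 ∧ u (j + L - 1) = l5) ∨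
  (L = 2 ∧ u j = l3 ∧ u (j + 1) = l5)

/-- The entry of `u` at position `j` is an `F`-plain segment. -/
def FPlain (u : ℕ → Letter) (j : ℕ) : Prop :=
  ∀ p L, FSpecial u p L → ¬(p ≤ j ∧ j < p + L)

/-- An `F`-segment: an `F`-special segment, or a single `F`-plain entry. -/
def FSegment (u : ℕ → Letter) (j L : ℕ) : Prop :=
  FSpecial u j L ∨ (L = 1 ∧ FPlain u j)

/-- `b` enumerates the starting positions of a factorization of `x` into consecutive
segments: `b 0 = 0` and for each `j`, the factor occupying positions `[b j, b (j+1))`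
is a segment (in the sense of `Seg`). -/
def SegDecomp (Seg : (ℕ → Letter) → ℕ → ℕ → Prop) (x : ℕ → Letter) (b : ℕ → ℕ) : Prop :=
  b 0 = 0 ∧ ∀ j, Seg x (b j) (b (j + 1) - b j)

/-- The word map `g₀`: `35^k ↦ 42^{k-1}5`, `42^k5 ↦ 42^{k-1}55` (`k ≥ 1`), `45 ↦ 35`,
and `a ↦ a` for single letters.  (All these maps preserve length.) -/
def g0 (w : List Letter) : List Letter :=
  if w.length ≤ 1 then w
  else if w = [l4, l5] then [l3, l5]
  else if w.headI = l3 then l4 :: (List.replicate (w.length - 2) l2 ++ [l5])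
  else l4 :: (List.replicate (w.length - 3) l2 ++ [l5, l5])

/-- `u = g(x)`: for some `E`-segment decomposition `x = X₁X₂⋯` (with starting positions
`b`), the sequence `u` is `g₀(X₁)g₀(X₂)⋯`, each `g₀(X_j)` occupying the positions
of `X_j` (note that `g₀` preserves lengths). -/
def gRel (x u : ℕ → Letter) : Prop :=
  ∃ b : ℕ → ℕ, SegDecomp ESegment x b ∧
    ∀ j, fword u (b j) (b (j + 1) - b j) = g0 (fword x (b j) (b (j + 1) - b j))

/-- `E' = π_E(Ω)`. -/
def Eset' (E : Set ℂ) : Set ℂ := {p | ∃ x ∈ OmegaSeq, codes phiE E x p}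

/-- `F' = π_F(Ω)`. -/
def Fset' (F : Set ℂ) : Set ℂ := {q | ∃ u ∈ OmegaSeq, codes phiF F u q}

/-- The dimension `s = log 5 / log 3`. -/
def sDim : ℝ := Real.log 5 / Real.log 3

end

/-! ### Cells of a fractal square and integer translates -/

/-- The IFS with contraction ratio `1/3` and digits `X j + i Y j`. -/
noncomputable def aff (X Y : Letter → ℤ) (j : Letter) (z : ℂ) : ℂ := (z + ((X j : ℂ) + (Y j : ℂ) * Complex.I)) / 3

/-- Real parts of the digits of `E`. -/
def XE : Letter → ℤ := ![0, 1, 2, 2, 1]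
/-- Imaginary parts of the digits of `E`. -/
def YE : Letter → ℤ := ![0, 0, 0, 1, 2]
/-- Real parts of the digits of `F`. -/
def XF : Letter → ℤ := ![1, 1, 1, 0, 2]
/-- Imaginary parts of the digits of `F`. -/
def YF : Letter → ℤ := ![2, 1, 0, 0, 1]

lemma phiE_eq : phiE = aff XE YE := by
  funext j z
  fin_cases j <;> simp [phiE, aff, dE, XE, YE]

lemma phiF_eq : phiF = aff XF YF := by
  funext j z
  fin_cases j <;> simp [phiF, aff, dF, XF, YF]

/-- The level-`n` cells of `x` and `y` intersect. -/
def Meets (φ : Letter → ℂ → ℂ) (K : Set ℂ) (x y : ℕ → Letter) (n : ℕ) : Prop :=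
  (iterPhi φ (preWord x n) '' K ∩ iterPhi φ (preWord y n) '' K).Nonempty

/-- `K` meets its translate by `s + t i`. -/
def Tr (K : Set ℂ) (s t : ℤ) : Prop :=
  ∃ a ∈ K, ∃ b ∈ K, a - b = (s : ℂ) + (t : ℂ) * Complex.I

/-- One coordinate of the integer vector separating the level-`n` cells of `x` and `y`. -/
def sepVec (X : Letter → ℤ) (x y : ℕ → Letter) : ℕ → ℤ
  | 0 => 0
  | n + 1 => 3 * sepVec X x y n + X (y n) - X (x n)

lemma iterPhi_append (φ : Letter → ℂ → ℂ) (w w' : List Letter) (z : ℂ) :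
    iterPhi φ (w ++ w') z = iterPhi φ w (iterPhi φ w' z) := by
  induction w with
  | nil => rfl
  | cons j w ih => simp [iterPhi, ih]

lemma iterPhi_succ (φ : Letter → ℂ → ℂ) (x : ℕ → Letter) (n : ℕ) (z : ℂ) :
    iterPhi φ (preWord x (n + 1)) z = iterPhi φ (preWord x n) (φ (x n) z) := by
  have h : preWord x (n + 1) = preWord x n ++ [x n] := by
    rw [preWord, List.ofFn_succ_last]
    rfl
  rw [h, iterPhi_append]
  rfl

lemma iter_eq_iff (X Y : Letter → ℤ) (x y : ℕ → Letter) (n : ℕ) (a b : ℂ) :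
    iterPhi (aff X Y) (preWord x n) a = iterPhi (aff X Y) (preWord y n) b ↔
      a - b = (sepVec X x y n : ℂ) + (sepVec Y x y n : ℂ) * Complex.I := by
  induction n generalizing a b with
  | zero => simp [preWord, iterPhi, sepVec, sub_eq_zero]
  | succ n ih =>
    rw [iterPhi_succ, iterPhi_succ, ih]
    simp only [aff, sepVec]
    push_cast
    constructor
    · intro h
      linear_combination 3 * h
    · intro h
      linear_combination h / 3

lemma meets_iff (X Y : Letter → ℤ) (K : Set ℂ) (x y : ℕ → Letter) (n : ℕ) :
    Meets (aff X Y) K x y n ↔ Tr K (sepVec X x y n) (sepVec Y x y n) := by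
  constructor
  · rintro ⟨_, ⟨a, ha, rfl⟩, b, hb, h⟩
    exact ⟨a, ha, b, hb, (iter_eq_iff X Y x y n a b).1 h.symm⟩
  · rintro ⟨a, ha, b, hb, h⟩
    exact ⟨_, ⟨a, ha, rfl⟩, b, hb, ((iter_eq_iff X Y x y n a b).2 h).symm⟩

lemma sepVec_agree (X : Letter → ℤ) (x y : ℕ → Letter) (n : ℕ) (h : ∀ i < n, x i = y i) :
    sepVec X x y n = 0 := by
  induction n with
  | zero => rfl
  | succ n ih =>
    rw [sepVec, ih fun i hi => h i (by omega), h n (by omega)]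
    ring

lemma meets_anti {φ : Letter → ℂ → ℂ} {K : Set ℂ} (hK : IsAttractor φ K) {x y : ℕ → Letter}
    {m n : ℕ} (hmn : m ≤ n) (h : Meets φ K x y n) : Meets φ K x y m := by
  induction n, hmn using Nat.le_induction with
  | base => exact h
  | succ n _ ih =>
    obtain ⟨_, ⟨a, ha, rfl⟩, b, hb, h⟩ := h
    rw [iterPhi_succ, iterPhi_succ] at h
    have hmem : ∀ j, ∀ z ∈ K, φ j z ∈ K := fun j z hz => by
      rw [hK.2.2]
      exact Set.mem_iUnion.2 ⟨j, z, hz, rfl⟩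
    exact ih ⟨_, ⟨_, hmem (x n) a ha, rfl⟩, _, hmem (y n) b hb, h⟩

lemma meets_agree (X Y : Letter → ℤ) {K : Set ℂ} (hK : K.Nonempty) (x y : ℕ → Letter) (n : ℕ)
    (h : ∀ i < n, x i = y i) : Meets (aff X Y) K x y n := by
  rw [meets_iff, sepVec_agree X x y n h, sepVec_agree Y x y n h]
  obtain ⟨a, ha⟩ := hK
  exact ⟨a, ha, a, ha, by simp⟩

lemma meets_comm {φ : Letter → ℂ → ℂ} {K : Set ℂ} {x y : ℕ → Letter} {n : ℕ} :
    Meets φ K x y n ↔ Meets φ K y x n := by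
  rw [Meets, Meets, Set.inter_comm]

/-- A coordinate `f` on which the IFS acts by `t ↦ (t + Z j) / 3` with `Z j` in `[0,2]` takes values in `[0,1]` on the
attractor, as comparison at an extremal point shows. -/
lemma attractor_bound {X Y : Letter → ℤ} {K : Set ℂ} (hK : IsAttractor (aff X Y) K)
    (f : ℂ → ℝ) (hf : Continuous f) (Z : Letter → ℤ) (hZ : ∀ j, 0 ≤ Z j ∧ Z j ≤ 2)
    (hfZ : ∀ j z, f (aff X Y j z) = (f z + Z j) / 3) (z : ℂ) (hz : z ∈ K) :
    0 ≤ f z ∧ f z ≤ 1 := by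
  obtain ⟨hne, hc, heq⟩ := hK
  have hdec : ∀ z ∈ K, ∃ j, ∃ w ∈ K, f z = (f w + Z j) / 3 := fun z hz => by
    rw [heq] at hz
    obtain ⟨j, w, hw, rfl⟩ := Set.mem_iUnion.1 hz
    exact ⟨j, w, hw, hfZ j w⟩
  obtain ⟨M, hM, hMmax⟩ := hc.exists_isMaxOn hne hf.continuousOn
  obtain ⟨m, hm, hmmin⟩ := hc.exists_isMinOn hne hf.continuousOn
  obtain ⟨j, w, hw, hj⟩ := hdec M hM
  obtain ⟨k, w', hw', hk⟩ := hdec m hm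
  have h1 : f w ≤ f M := hMmax hw
  have h2 : f m ≤ f w' := hmmin hw'
  have h3 : f z ≤ f M := hMmax hz
  have h4 : f m ≤ f z := hmmin hz
  have h5 : (Z j : ℝ) ≤ 2 := by exact_mod_cast (hZ j).2
  have h6 : (0 : ℝ) ≤ Z k := by exact_mod_cast (hZ k).1
  constructor <;> linarith

lemma tr_bound {X Y : Letter → ℤ} {K : Set ℂ} (hK : IsAttractor (aff X Y) K)
    (hX : ∀ j, 0 ≤ X j ∧ X j ≤ 2) (hY : ∀ j, 0 ≤ Y j ∧ Y j ≤ 2) {s t : ℤ} (h : Tr K s t) :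
    (-1 ≤ s ∧ s ≤ 1) ∧ (-1 ≤ t ∧ t ≤ 1) := by
  obtain ⟨a, ha, b, hb, hab⟩ := h
  have hre := attractor_bound hK Complex.re Complex.continuous_re X hX (by
    intro j z
    have : aff X Y j z = ((1 / 3 : ℝ) : ℂ) * (z + ((X j : ℂ) + (Y j : ℂ) * Complex.I)) := by
      simp only [aff]; push_cast; ring
    rw [this, Complex.re_ofReal_mul]
    simp
    ring)
  have him := attractor_bound hK Complex.im Complex.continuous_im Y hY (by
    intro j z
    have : aff X Y j z = ((1 / 3 : ℝ) : ℂ) * (z + ((X j : ℂ) + (Y j : ℂ) * Complex.I)) := by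
      simp only [aff]; push_cast; ring
    rw [this, Complex.im_ofReal_mul]
    simp
    ring)
  have h1 : a.re - b.re = (s : ℝ) := by simpa using congrArg Complex.re hab
  have h2 : a.im - b.im = (t : ℝ) := by simpa using congrArg Complex.im hab
  have a1 := hre a ha
  have b1 := hre b hb
  have a2 := him a ha
  have b2 := him b hb
  refine ⟨⟨?_, ?_⟩, ?_, ?_⟩
  · exact_mod_cast (by push_cast; linarith : ((-1 : ℤ) : ℝ) ≤ (s : ℝ))
  · exact_mod_cast (by push_cast; linarith : (s : ℝ) ≤ ((1 : ℤ) : ℝ))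
  · exact_mod_cast (by push_cast; linarith : ((-1 : ℤ) : ℝ) ≤ (t : ℝ))
  · exact_mod_cast (by push_cast; linarith : (t : ℝ) ≤ ((1 : ℤ) : ℝ))

lemma tr_step {X Y : Letter → ℤ} {K : Set ℂ} (hK : IsAttractor (aff X Y) K) {s t : ℤ}
    (h : Tr K s t) : ∃ j k, Tr K (3 * s + X k - X j) (3 * t + Y k - Y j) := by
  obtain ⟨a, ha, b, hb, hab⟩ := h
  rw [hK.2.2] at ha hb
  obtain ⟨j, a', ha', rfl⟩ := Set.mem_iUnion.1 ha
  obtain ⟨k, b', hb', rfl⟩ := Set.mem_iUnion.1 hb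
  refine ⟨j, k, a', ha', b', hb', ?_⟩
  simp only [aff] at hab
  push_cast
  linear_combination 3 * hab

/-- The fixed point of each map lies in the attractor, as a limit of iterates. -/
lemma fixed_mem {X Y : Letter → ℤ} {K : Set ℂ} (hK : IsAttractor (aff X Y) K) (j : Letter) :
    ((X j : ℂ) + (Y j : ℂ) * Complex.I) / 2 ∈ K := by
  obtain ⟨⟨a, ha⟩, hc, heq⟩ := hK
  set c : ℂ := ((X j : ℂ) + (Y j : ℂ) * Complex.I) / 2 with hcdef
  have hmem : ∀ n : ℕ, c + (1 / 3 : ℂ) ^ n * (a - c) ∈ K := by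
    intro n
    induction n with
    | zero => simpa using ha
    | succ n ih =>
      rw [heq]
      refine Set.mem_iUnion.2 ⟨j, _, ih, ?_⟩
      simp only [aff]
      have : (X j : ℂ) + (Y j : ℂ) * Complex.I = 2 * c := by rw [hcdef]; ring
      rw [this, pow_succ]
      ring
  have hlim : Filter.Tendsto (fun n : ℕ => c + (1 / 3 : ℂ) ^ n * (a - c)) Filter.atTop (nhds c) := by
    have h0 : Filter.Tendsto (fun n : ℕ => (1 / 3 : ℂ) ^ n) Filter.atTop (nhds 0) :=
      tendsto_pow_atTop_nhds_zero_of_norm_lt_one (by norm_num)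
    simpa using (h0.mul_const (a - c)).const_add c
  exact hc.isClosed.mem_of_tendsto hlim (Filter.Eventually.of_forall hmem)

/-! ### Separation in `E` -/

lemma trE_diag {E : Set ℂ} (hE : IsAttractor (aff XE YE) E) {s t : ℤ} (h : Tr E s t) :
    s = 0 ∨ t = 0 := by
  have hX : ∀ j, 0 ≤ XE j ∧ XE j ≤ 2 := by decide
  have hY : ∀ j, 0 ≤ YE j ∧ YE j ≤ 2 := by decide
  obtain ⟨⟨h1, h2⟩, h3, h4⟩ := tr_bound hE hX hY h
  obtain ⟨j, k, hjk⟩ := tr_step hE h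
  have hb := tr_bound hE hX hY hjk
  clear hjk h
  revert j k
  interval_cases s <;> interval_cases t <;> decide

lemma trE_up {E : Set ℂ} (hE : IsAttractor (aff XE YE) E) {j k : Letter}
    (h : Tr E (3 * 0 + XE k - XE j) (3 * 1 + YE k - YE j)) : j = l5 ∧ k = l2 := by
  have hb := tr_bound hE (by decide) (by decide) h
  have hd := trE_diag hE h
  clear h
  revert j k
  decide

lemma trE_I {E : Set ℂ} (hE : IsAttractor (aff XE YE) E) : Tr E 0 1 := by
  refine ⟨_, fixed_mem hE l5, _, fixed_mem hE l2, ?_⟩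
  simp [XE, YE, l5, l2]
  ring

lemma sepVecE {x y : ℕ → Letter} (hx : x 0 = l3) (hy : y 0 = l4) (n : ℕ)
    (h : ∀ i, 1 ≤ i → i ≤ n → x i = l5 ∧ y i = l2) :
    sepVec XE x y (n + 1) = 0 ∧ sepVec YE x y (n + 1) = 1 := by
  induction n with
  | zero => simp only [sepVec, hx, hy]; decide
  | succ n ih =>
    obtain ⟨h1, h2⟩ := ih fun i hi hi' => h i hi (by omega)
    obtain ⟨h3, h4⟩ := h (n + 1) (by omega) le_rfl
    rw [sepVec, h1, sepVec, h2, h3, h4]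
    decide

lemma meetsE_of {E : Set ℂ} (hE : IsAttractor (aff XE YE) E) {x y : ℕ → Letter}
    (hx : x 0 = l3) (hy : y 0 = l4) (n : ℕ)
    (h : ∀ i, 1 ≤ i → i ≤ n → x i = l5 ∧ y i = l2) : Meets (aff XE YE) E x y (n + 1) := by
  obtain ⟨h1, h2⟩ := sepVecE hx hy n h
  rw [meets_iff, h1, h2]
  exact trE_I hE

lemma meetsE_forces {E : Set ℂ} (hE : IsAttractor (aff XE YE) E) {x y : ℕ → Letter}
    (hx : x 0 = l3) (hy : y 0 = l4) (n : ℕ) (hm : Meets (aff XE YE) E x y (n + 1)) :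
    ∀ i, 1 ≤ i → i ≤ n → x i = l5 ∧ y i = l2 := by
  induction n with
  | zero => intro i h1 h2; omega
  | succ n ih =>
    have ih' := ih (meets_anti hE (by omega) hm)
    obtain ⟨h1, h2⟩ := sepVecE hx hy n ih'
    rw [meets_iff, sepVec, h1, sepVec, h2] at hm
    intro i hi hi'
    rcases Nat.lt_or_ge i (n + 1) with h | h
    · exact ih' i hi (by omega)
    · obtain rfl : i = n + 1 := by omega
      exact trE_up hE hm

/-! ### Separation in `F` -/

lemma trF_re {F : Set ℂ} (hF : IsAttractor (aff XF YF) F) {s t : ℤ} (h : Tr F s t) : s = 0 := by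
  have hX : ∀ j, 0 ≤ XF j ∧ XF j ≤ 2 := by decide
  have hY : ∀ j, 0 ≤ YF j ∧ YF j ≤ 2 := by decide
  obtain ⟨⟨h1, h2⟩, h3, h4⟩ := tr_bound hF hX hY h
  -- A horizontal unit translate leads to a diagonal one, which leads nowhere.
  obtain ⟨j, k, hjk⟩ := tr_step hF h
  have hb := tr_bound hF hX hY hjk
  obtain ⟨j', k', hjk'⟩ := tr_step hF hjk
  have hb' := tr_bound hF hX hY hjk'
  clear hjk hjk' h
  revert j k j' k'
  interval_cases s <;> interval_cases t <;> decide

lemma sepF_col {F : Set ℂ} (hF : IsAttractor (aff XF YF) F) {u v : ℕ → Letter} {c : ℕ}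
    (h : ∀ i < c, u i = v i) (hc : XF (u c) ≠ XF (v c)) : ¬ Meets (aff XF YF) F u v (c + 1) := by
  intro hm
  rw [meets_iff, sepVec, sepVec_agree XF u v c h] at hm
  have := trF_re hF hm
  omega

lemma sepF_two {F : Set ℂ} (hF : IsAttractor (aff XF YF) F) {u v : ℕ → Letter} {c : ℕ}
    (h : ∀ i < c, u i = v i) (hu : u c = l2) (hv : v c ≠ l2)
    (hu' : u (c + 1) = l2 ∨ u (c + 1) = l5) : ¬ Meets (aff XF YF) F u v (c + 2) := by
  intro hm
  have hm' := meets_anti hF (show c + 1 ≤ c + 2 by omega) hm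
  rw [meets_iff, sepVec, sepVec, sepVec_agree XF u v c h, sepVec_agree YF u v c h] at hm'
  rw [meets_iff, sepVec, sepVec, sepVec, sepVec, sepVec_agree XF u v c h,
    sepVec_agree YF u v c h] at hm
  have h1 := trF_re hF hm
  have h2 := trF_re hF hm'
  have h3 := tr_bound hF (by decide) (by decide) hm
  clear hm hm'
  rw [hu] at h1 h2 h3
  generalize u (c + 1) = p at *
  generalize v (c + 1) = q at *
  generalize v c = r at *
  clear h hu
  revert p q r
  decide

/-! ### The beginning of `g(x)` -/

lemma special_first {x : ℕ → Letter} {p L : ℕ} (h : ESpecial x p L) : x p = l3 ∨ x p = l4 := by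
  rcases h with h | h
  · exact Or.inl h.2.1
  · exact Or.inr h.2.1

lemma seg_pos {x : ℕ → Letter} {p L : ℕ} (h : ESegment x p L) : 1 ≤ L := by
  rcases h with (h | h) | h <;> omega

lemma seg_other {x : ℕ → Letter} {p L : ℕ} (h : ESegment x p L) (h3 : x p ≠ l3) (h4 : x p ≠ l4) :
    L = 1 := by
  rcases h with h | h
  · rcases special_first h with h | h
    · exact absurd h h3
    · exact absurd h h4
  · exact h.1

lemma seg_three {x : ℕ → Letter} {p L a : ℕ} (h : ESegment x p L) (h3 : x p = l3)
    (h5 : ∀ i, 1 ≤ i → i ≤ a → x (p + i) = l5) (ha : x (p + (a + 1)) ≠ l5) : L = a + 1 := by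
  rcases h with (⟨hL, -, hs, he⟩ | ⟨hL, h4, -⟩) | ⟨hL, hpl⟩
  · rcases lt_trichotomy L (a + 1) with hlt | heq | hgt
    · exact absurd (h5 L (by omega) (by omega)) he
    · exact heq
    · exact absurd (hs (a + 1) (by omega) hgt) ha
  · rw [h3] at h4
    exact absurd h4 (by decide)
  · rcases Nat.eq_zero_or_pos a with rfl | ha0
    · exact hL
    · exact absurd ⟨le_rfl, by omega⟩ (hpl p (a + 1)
        (Or.inl ⟨by omega, h3, fun i hi hi' => h5 i hi (by omega), ha⟩))

/-- A special segment starting with `4` runs up to the first letter other than `2`, which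
is a `5`. -/
lemma special_four {x : ℕ → Letter} {p L b : ℕ} (h : ESpecial x p L) (h4 : x p = l4)
    (h2 : ∀ i, 1 ≤ i → i ≤ b → x (p + i) = l2) (hb : x (p + (b + 1)) ≠ l2) :
    L = b + 2 ∧ x (p + (b + 1)) = l5 := by
  rcases h with ⟨hL, h3, -⟩ | ⟨hL, -, hs, he⟩
  · rw [h4] at h3
    exact absurd h3 (by decide)
  · rcases lt_trichotomy L (b + 2) with hlt | heq | hgt
    · have := h2 (L - 1) (by omega) (by omega)
      rw [← Nat.add_sub_assoc (by omega), he] at this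
      exact absurd this (by decide)
    · subst heq
      exact ⟨rfl, he⟩
    · exact absurd (hs (b + 1) (by omega) (by omega)) hb

lemma seg_four_five {x : ℕ → Letter} {p L b : ℕ} (h : ESegment x p L) (h4 : x p = l4)
    (h2 : ∀ i, 1 ≤ i → i ≤ b → x (p + i) = l2) (hb : x (p + (b + 1)) = l5) : L = b + 2 := by
  rcases h with h | ⟨-, hpl⟩
  · exact (special_four h h4 h2 (by rw [hb]; decide)).1
  · exact absurd ⟨le_rfl, by omega⟩ (hpl p (b + 2)
      (Or.inr ⟨by omega, h4, fun i hi hi' => h2 i hi (by omega), hb⟩))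

lemma seg_four_plain {x : ℕ → Letter} {p L b : ℕ} (h : ESegment x p L) (h4 : x p = l4)
    (h2 : ∀ i, 1 ≤ i → i ≤ b → x (p + i) = l2) (hb : x (p + (b + 1)) ≠ l2)
    (hb' : x (p + (b + 1)) ≠ l5) : L = 1 := by
  rcases h with h | ⟨hL, -⟩
  · exact absurd (special_four h h4 h2 hb).2 hb'
  · exact hL

lemma fword_length (x : ℕ → Letter) (p L : ℕ) : (fword x p L).length = L := by
  simp [fword]

lemma fword_get {u : ℕ → Letter} {p L : ℕ} {w : List Letter} (h : fword u p L = w) {i : ℕ}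
    (hi : i < L) : w[i]? = some (u (p + i)) := by
  rw [← h]
  simp [fword, hi]

lemma fword_headI (x : ℕ → Letter) (p L : ℕ) (hL : 1 ≤ L) : (fword x p L).headI = x p := by
  obtain ⟨L, rfl⟩ := Nat.exists_eq_add_of_le' hL
  simp [fword, List.ofFn_succ]

lemma val_one {x u : ℕ → Letter} {p : ℕ} (h : fword u p 1 = g0 (fword x p 1)) : u p = x p := by
  simpa [g0, fword] using h

lemma val_three {x u : ℕ → Letter} {p a : ℕ} (h3 : x p = l3)
    (h : fword u p (a + 2) = g0 (fword x p (a + 2))) :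
    u p = l4 ∧ (∀ i, 1 ≤ i → i ≤ a → u (p + i) = l2) ∧ u (p + (a + 1)) = l5 := by
  have hhead := fword_headI x p (a + 2) (by omega)
  have hne : fword x p (a + 2) ≠ [l4, l5] := by
    intro h'
    rw [h'] at hhead
    rw [h3] at hhead
    exact absurd hhead (by decide)
  have hg : g0 (fword x p (a + 2)) = l4 :: (List.replicate a l2 ++ [l5]) := by
    rw [g0, if_neg (by rw [fword_length]; omega), if_neg hne, if_pos (by rw [hhead, h3]),
      fword_length]
    rfl
  rw [hg] at h
  refine ⟨?_, fun i hi hi' => ?_, ?_⟩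
  · have := fword_get h (i := 0) (by omega)
    simpa using this.symm
  · obtain ⟨i, rfl⟩ := Nat.exists_eq_add_of_le' hi
    have := fword_get h (i := i + 1) (by omega)
    rw [List.getElem?_cons_succ, List.getElem?_append_left (by simp; omega),
      List.getElem?_replicate, if_pos (by omega)] at this
    exact (Option.some.inj this).symm
  · have := fword_get h (i := a + 1) (by omega)
    simpa using this.symm

lemma val_four_zero {x u : ℕ → Letter} {p : ℕ} (h4 : x p = l4) (h5 : x (p + 1) = l5)
    (h : fword u p 2 = g0 (fword x p 2)) : u p = l3 ∧ u (p + 1) = l5 := by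
  have hx : fword x p 2 = [l4, l5] := by simp [fword, h4, h5]
  rw [hx, show g0 [l4, l5] = [l3, l5] by simp [g0]] at h
  simpa [fword] using h

lemma val_four_succ {x u : ℕ → Letter} {p b : ℕ} (h4 : x p = l4)
    (h : fword u p (b + 3) = g0 (fword x p (b + 3))) :
    u p = l4 ∧ (∀ i, 1 ≤ i → i ≤ b → u (p + i) = l2) ∧ u (p + (b + 1)) = l5 ∧
      u (p + (b + 2)) = l5 := by
  have hhead := fword_headI x p (b + 3) (by omega)
  have hlen := fword_length x p (b + 3)
  have hne : fword x p (b + 3) ≠ [l4, l5] := by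
    intro h'
    rw [h'] at hlen
    simp at hlen
  have hg : g0 (fword x p (b + 3)) = l4 :: (List.replicate b l2 ++ [l5, l5]) := by
    rw [g0, if_neg (by rw [hlen]; omega), if_neg hne, if_neg (by rw [hhead, h4]; decide), hlen]
    rfl
  rw [hg] at h
  refine ⟨?_, fun i hi hi' => ?_, ?_, ?_⟩
  · have := fword_get h (i := 0) (by omega)
    simpa using this.symm
  · obtain ⟨i, rfl⟩ := Nat.exists_eq_add_of_le' hi
    have := fword_get h (i := i + 1) (by omega)
    rw [List.getElem?_cons_succ, List.getElem?_append_left (by simp; omega),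
      List.getElem?_replicate, if_pos (by omega)] at this
    exact (Option.some.inj this).symm
  · have := fword_get h (i := b + 1) (by omega)
    simpa using this.symm
  · have := fword_get h (i := b + 2) (by omega)
    rw [List.getElem?_cons_succ, List.getElem?_append_right (by simp)] at this
    simpa using this.symm

/-- At the start of a segment, `g` fixes the letters `1`, `2`, `5` and preserves the
pair `{3, 4}`. -/
lemma val_start {x u : ℕ → Letter} {p L : ℕ} (hs : ESegment x p L)
    (h : fword u p L = g0 (fword x p L)) :
    u p = x p ∨ ((x p = l3 ∨ x p = l4) ∧ (u p = l3 ∨ u p = l4)) := by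
  rcases hs with hs | ⟨rfl, -⟩
  · right
    refine ⟨special_first hs, ?_⟩
    rcases hs with ⟨hL, h3, -⟩ | ⟨hL, h4, -, h5⟩
    · obtain ⟨a, rfl⟩ := Nat.exists_eq_add_of_le' hL
      exact Or.inr (val_three h3 h).1
    · obtain ⟨a, rfl⟩ := Nat.exists_eq_add_of_le' hL
      rcases a with _ | a
      · exact Or.inl (val_four_zero h4 h5 h).1
      · exact Or.inr (val_four_succ h4 h).1
  · exact Or.inl (val_one h)

lemma start_ne_five {x u : ℕ → Letter} {p L : ℕ} (hs : ESegment x p L)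
    (h : fword u p L = g0 (fword x p L)) (h5 : x p ≠ l5) : u p ≠ l5 := by
  rcases val_start hs h with h' | ⟨-, h' | h'⟩
  · rwa [h']
  · rw [h']; decide
  · rw [h']; decide

lemma start_ne_two {x u : ℕ → Letter} {p L : ℕ} (hs : ESegment x p L)
    (h : fword u p L = g0 (fword x p L)) (h2 : x p ≠ l2) : u p ≠ l2 := by
  rcases val_start hs h with h' | ⟨-, h' | h'⟩
  · rwa [h']
  · rw [h']; decide
  · rw [h']; decide

lemma gRel_three_zero {x u : ℕ → Letter} (h : gRel x u) (h3 : x 0 = l3) (h5 : x 1 ≠ l5) :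
    u 0 = l3 ∧ u 1 ≠ l5 := by
  obtain ⟨b, ⟨hb0, hs⟩, hw⟩ := h
  have hs0 := hs 0
  have hw0 := hw 0
  rw [hb0] at hs0 hw0
  have hL := seg_three (a := 0) hs0 h3 (fun i _ _ => by omega) h5
  rw [hL] at hw0
  have hb1 : b 1 = 1 := by simpa using hL
  refine ⟨(val_one hw0).trans h3, ?_⟩
  have := start_ne_five (hs 1) (hw 1)
  rw [hb1] at this
  exact this h5

lemma gRel_three_pos {x u : ℕ → Letter} {a : ℕ} (h : gRel x u) (h3 : x 0 = l3)
    (h5 : ∀ i, 1 ≤ i → i ≤ a + 1 → x i = l5) (ha : x (a + 2) ≠ l5) :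
    u 0 = l4 ∧ (∀ i, 1 ≤ i → i ≤ a → u i = l2) ∧ u (a + 1) = l5 ∧ u (a + 2) ≠ l5 := by
  obtain ⟨b, ⟨hb0, hs⟩, hw⟩ := h
  have hs0 := hs 0
  have hw0 := hw 0
  rw [hb0] at hs0 hw0
  have hL := seg_three (a := a + 1) hs0 h3 (fun i hi hi' => by simpa using h5 i hi hi')
    (by simpa using ha)
  rw [hL] at hw0
  have hb1 : b 1 = a + 2 := by simpa using hL
  obtain ⟨k1, k2, k3⟩ := val_three h3 hw0
  have := start_ne_five (hs 1) (hw 1)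
  rw [hb1] at this
  exact ⟨k1, fun i hi hi' => by simpa using k2 i hi hi', by simpa using k3, this ha⟩

lemma gRel_four_zero {x u : ℕ → Letter} (h : gRel x u) (h4 : x 0 = l4) (h5 : x 1 = l5) :
    u 0 = l3 ∧ u 1 = l5 := by
  obtain ⟨b, ⟨hb0, hs⟩, hw⟩ := h
  have hs0 := hs 0
  have hw0 := hw 0
  rw [hb0] at hs0 hw0
  have hL := seg_four_five (b := 0) hs0 h4 (fun i _ _ => by omega) h5
  rw [hL] at hw0
  simpa using val_four_zero h4 h5 hw0

lemma gRel_four_five {x u : ℕ → Letter} {k : ℕ} (h : gRel x u) (h4 : x 0 = l4)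
    (h2 : ∀ i, 1 ≤ i → i ≤ k + 1 → x i = l2) (h5 : x (k + 2) = l5) :
    u 0 = l4 ∧ (∀ i, 1 ≤ i → i ≤ k → u i = l2) ∧ u (k + 1) = l5 ∧ u (k + 2) = l5 := by
  obtain ⟨b, ⟨hb0, hs⟩, hw⟩ := h
  have hs0 := hs 0
  have hw0 := hw 0
  rw [hb0] at hs0 hw0
  have hL := seg_four_five (b := k + 1) hs0 h4 (fun i hi hi' => by simpa using h2 i hi hi')
    (by simpa using h5)
  rw [hL] at hw0
  simpa using val_four_succ h4 hw0

lemma gRel_four_plain {x u : ℕ → Letter} {k : ℕ} (h : gRel x u) (h4 : x 0 = l4)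
    (h2 : ∀ i, 1 ≤ i → i ≤ k → x i = l2) (hk2 : x (k + 1) ≠ l2) (hk5 : x (k + 1) ≠ l5) :
    u 0 = l4 ∧ (∀ i, 1 ≤ i → i ≤ k → u i = l2) ∧ u (k + 1) ≠ l2 ∧ u (k + 1) ≠ l5 := by
  obtain ⟨b, ⟨hb0, hs⟩, hw⟩ := h
  -- The letters `4` and `2^k` are all plain, so the first segments have length one.
  have hb : ∀ j, j ≤ k + 1 → b j = j ∧ ∀ i < j, u i = x i := by
    intro j
    induction j with
    | zero => exact fun _ => ⟨hb0, fun i hi => by omega⟩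
    | succ j ih =>
      intro hj
      obtain ⟨hbj, hu⟩ := ih (by omega)
      have hsj := hs j
      have hwj := hw j
      rw [hbj] at hsj hwj
      have hL : b (j + 1) - j = 1 := by
        rcases Nat.eq_zero_or_pos j with rfl | hj0
        · exact seg_four_plain (b := k) hsj h4 (fun i hi hi' => by simpa using h2 i hi hi')
            (by simpa using hk2) (by simpa using hk5)
        · refine seg_other hsj ?_ ?_ <;> rw [h2 j hj0 (by omega)] <;> decide
      rw [hL] at hwj
      refine ⟨by omega, fun i hi => ?_⟩
      rcases Nat.lt_or_ge i j with h | h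
      · exact hu i h
      · obtain rfl : i = j := by omega
        exact val_one hwj
  obtain ⟨hbk, hu⟩ := hb (k + 1) le_rfl
  have n2 := start_ne_two (hs (k + 1)) (hw (k + 1))
  have n5 := start_ne_five (hs (k + 1)) (hw (k + 1))
  rw [hbk] at n2 n5
  exact ⟨(hu 0 (by omega)).trans h4, fun i hi hi' => (hu i (by omega)).trans (h2 i hi hi'),
    n2 hk2, n5 hk5⟩

/-! ### Comparison of the two separation numbers -/

/-- A sequence of `Ω` leaves any letter other than `4`: there is a maximal run of that letter
after the first entry. -/
lemma exists_run {x : ℕ → Letter} (hx : x ∈ OmegaSeq) {l : Letter} (hl : l ≠ l4) :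
    ∃ a, (∀ i, 1 ≤ i → i ≤ a → x i = l) ∧ x (a + 1) ≠ l := by
  classical
  obtain ⟨N, hN⟩ := hx
  have hex : ∃ a, x (a + 1) ≠ l := ⟨N, by rw [hN (N + 1) (by omega)]; exact hl.symm⟩
  refine ⟨Nat.find hex, fun i hi hi' => ?_, Nat.find_spec hex⟩
  have := Nat.find_min hex (m := i - 1) (by omega)
  rw [Nat.sub_add_cancel hi] at this
  exact not_not.1 this

lemma col_five {c : Letter} (h : c ≠ l5) : XF c ≠ XF l5 ∧ XF l5 ≠ XF c := by
  revert c
  decide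

/-- If `n` is the length of the longest common run of `5`s in `x` and `2`s in `y` after the first
entry, then `g(x)` and `g(y)` agree on `n` letters and are separated in `F` by level `n + 3`. -/
lemma core {F : Set ℂ} (hF : IsAttractor (aff XF YF) F) {x y u v : ℕ → Letter}
    (hx : x ∈ OmegaSeq) (hy : y ∈ OmegaSeq) (hx0 : x 0 = l3) (hy0 : y 0 = l4)
    (hu : gRel x u) (hv : gRel y v) :
    ∃ n, (∀ i, 1 ≤ i → i ≤ n → x i = l5 ∧ y i = l2) ∧ ¬ (x (n + 1) = l5 ∧ y (n + 1) = l2) ∧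
      (∀ i < n, u i = v i) ∧ ∃ c ≤ n + 3, ¬ Meets (aff XF YF) F u v c := by
  obtain ⟨a, ha, ha'⟩ := exists_run hx (l := l5) (by decide)
  obtain ⟨b, hb, hb'⟩ := exists_run hy (l := l2) (by decide)
  have e34 : XF l3 ≠ XF l4 := by decide
  have e25 : XF l2 ≠ XF l5 := by decide
  refine ⟨min a b, fun i hi hi' => ⟨ha i hi (by omega), hb i hi (by omega)⟩, ?_, ?_⟩
  · rintro ⟨h1, h2⟩
    rcases le_total a b with h | h
    · rw [min_eq_left h] at h1; exact ha' h1
    · rw [min_eq_right h] at h2; exact hb' h2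
  rcases a with _ | a
  · -- `x = 3c'⋯`: the images separate at one of the first two letters.
    obtain ⟨u0, u1⟩ := gRel_three_zero hu hx0 ha'
    refine ⟨fun i hi => by omega, ?_⟩
    have hsep4 : v 0 = l4 → ∃ c ≤ min 0 b + 3, ¬ Meets (aff XF YF) F u v c := fun v0 =>
      ⟨1, by omega, sepF_col hF (c := 0) (fun i hi => by omega) (by rw [u0, v0]; exact e34)⟩
    by_cases hc : y (b + 1) = l5
    · rcases b with _ | b
      · obtain ⟨v0, v1⟩ := gRel_four_zero hv hy0 hc
        refine ⟨2, by omega, sepF_col hF (c := 1) (fun i hi => ?_) ?_⟩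
        · obtain rfl : i = 0 := by omega
          rw [u0, v0]
        · rw [v1]; exact (col_five u1).1
      · exact hsep4 (gRel_four_five hv hy0 hb hc).1
    · exact hsep4 (gRel_four_plain hv hy0 hb hb' hc).1
  · obtain ⟨u0, u2, u5, un⟩ := gRel_three_pos hu hx0 ha ha'
    by_cases hc : y (b + 1) = l5
    · rcases b with _ | b
      · obtain ⟨v0, v1⟩ := gRel_four_zero hv hy0 hc
        exact ⟨fun i hi => by omega, 1, by omega,
          sepF_col hF (c := 0) (fun i hi => by omega) (by rw [u0, v0]; exact e34.symm)⟩
      · -- `42^a5c''` against `42^b55`.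
        obtain ⟨v0, v2, v5, v6⟩ := gRel_four_five hv hy0 hb hc
        have hag : ∀ i < min (a + 1) (b + 1), u i = v i := by
          intro i hi
          rcases Nat.eq_zero_or_pos i with rfl | h0
          · rw [u0, v0]
          · rw [u2 i h0 (by omega), v2 i h0 (by omega)]
        refine ⟨hag, ?_⟩
        rcases lt_trichotomy a b with h | rfl | h
        · refine ⟨a + 2, by omega, sepF_col hF (c := a + 1) (fun i hi => hag i (by omega)) ?_⟩
          rw [u5, v2 (a + 1) (by omega) (by omega)]
          exact e25.symm
        · refine ⟨a + 3, by omega, sepF_col hF (c := a + 2) (fun i hi => ?_) ?_⟩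
          · rcases Nat.lt_or_ge i (a + 1) with h | h
            · exact hag i (by omega)
            · obtain rfl : i = a + 1 := by omega
              rw [u5, v5]
          · rw [v6]; exact (col_five un).1
        · refine ⟨b + 2, by omega, sepF_col hF (c := b + 1) (fun i hi => hag i (by omega)) ?_⟩
          rw [v5, u2 (b + 1) (by omega) (by omega)]
          exact e25
    · -- `42^a5c''` against `42^bc⋯` with `c` distinct from `2` and `5`.
      obtain ⟨v0, v2, vn2, vn5⟩ := gRel_four_plain hv hy0 hb hb' hc
      have hag : ∀ i, i ≤ a → i ≤ b → u i = v i := by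
        intro i hi hi'
        rcases Nat.eq_zero_or_pos i with rfl | h0
        · rw [u0, v0]
        · rw [u2 i h0 (by omega), v2 i h0 (by omega)]
      refine ⟨fun i hi => hag i (by omega) (by omega), ?_⟩
      rcases lt_trichotomy a b with h | rfl | h
      · refine ⟨a + 2, by omega,
          sepF_col hF (c := a + 1) (fun i hi => hag i (by omega) (by omega)) ?_⟩
        rw [u5, v2 (a + 1) (by omega) (by omega)]
        exact e25.symm
      · refine ⟨a + 2, by omega,
          sepF_col hF (c := a + 1) (fun i hi => hag i (by omega) (by omega)) ?_⟩
        rw [u5]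
        exact (col_five vn5).2
      · refine ⟨b + 3, by omega, sepF_two hF (c := b + 1)
          (fun i hi => hag i (by omega) (by omega)) (u2 _ (by omega) (by omega)) vn2 ?_⟩
        rcases Nat.lt_or_ge (b + 1) a with h' | h'
        · exact Or.inl (u2 _ (by omega) (by omega))
        · obtain rfl : a = b + 1 := by omega
          exact Or.inr u5

lemma sepNum_meets {φ : Letter → ℂ → ℂ} {K : Set ℂ} {x y : ℕ → Letter} {n m : ℕ}
    (h : SepNum φ K x y n) (hm : Meets φ K x y m) : m ≤ n := by
  by_contra hlt
  exact hm.ne_empty (h.2 m (by omega))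

lemma codes_meets {φ : Letter → ℂ → ℂ} {K : Set ℂ} {x y : ℕ → Letter} {p : ℂ}
    (hx : codes φ K x p) (hy : codes φ K y p) (n : ℕ) : Meets φ K x y n :=
  ⟨p, hx n, hy n⟩

lemma sepNum_comm {φ : Letter → ℂ → ℂ} {K : Set ℂ} {x y : ℕ → Letter} {n : ℕ}
    (h : SepNum φ K x y n) : SepNum φ K y x n :=
  ⟨meets_comm.1 h.1, fun m hm => by rw [Set.inter_comm]; exact h.2 m hm⟩

/-- The case `x₁ = 3`, `y₁ = 4`; the other case follows by exchanging `x` and `y`. -/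
lemma ordered_case {E F : Set ℂ} (hE : IsAttractor phiE E) (hF : IsAttractor phiF F)
    {x y : ℕ → Letter} (hx : x ∈ OmegaSeq) (hy : y ∈ OmegaSeq) (hx0 : x 0 = l3) (hy0 : y 0 = l4)
    {u v : ℕ → Letter} (hu : gRel x u) (hv : gRel y v) {p q p' q' : ℂ}
    (hp : codes phiE E x p) (hq : codes phiE E y q)
    (hp' : codes phiF F u p') (hq' : codes phiF F v q') :
    p ≠ q ∧ p' ≠ q' ∧
    ∀ n : ℕ, SepNum phiE E x y n → 1 ≤ n ∧
      ∀ m : ℕ, SepNum phiF F u v m → (n : ℤ) - 1 ≤ (m : ℤ) ∧ (m : ℤ) ≤ (n : ℤ) + 2 := by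
  rw [phiE_eq] at *
  rw [phiF_eq] at *
  obtain ⟨k, hk, hk', hag, c, hc, hsep⟩ := core hF hx hy hx0 hy0 hu hv
  have hEm := meetsE_of hE hx0 hy0 k hk
  have hEn : ¬ Meets (aff XE YE) E x y (k + 2) := fun h =>
    hk' (meetsE_forces hE hx0 hy0 (k + 1) h (k + 1) (by omega) le_rfl)
  refine ⟨?_, ?_, fun n hn => ?_⟩
  · rintro rfl
    exact hEn (codes_meets hp hq _)
  · rintro rfl
    exact hsep (codes_meets hp' hq' _)
  · have h1 := sepNum_meets hn hEm
    have h2 : n < k + 2 := by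
      by_contra h
      exact hEn (meets_anti hE (by omega) hn.1)
    refine ⟨by omega, fun m hm => ?_⟩
    have h3 := sepNum_meets hm (meets_agree XF YF hF.1 u v k hag)
    have h4 : m < c := by
      by_contra h
      exact hsep (meets_anti hF (by omega) hm.1)
    omega

/-- If `x, y ∈ Ω` with `(x₁,y₁) ∈ {(3,4),(4,3)}`, then
`π_E(x) ≠ π_E(y)`, `π_F(g(x)) ≠ π_F(g(y))`, and `n = Λ_E(x,y)` satisfies `n ≥ 1` and
`n − 1 ≤ Λ_F(g(x),g(y)) ≤ n + 2`. -/
theorem stmt18 (E F : Set ℂ) (hE : IsAttractor phiE E) (hF : IsAttractor phiF F)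
    (x y : ℕ → Letter) (hx : x ∈ OmegaSeq) (hy : y ∈ OmegaSeq)
    (h1 : (x 0, y 0) = (l3, l4) ∨ (x 0, y 0) = (l4, l3))
    (u v : ℕ → Letter) (hu : gRel x u) (hv : gRel y v)
    (p q p' q' : ℂ)
    (hp : codes phiE E x p) (hq : codes phiE E y q)
    (hp' : codes phiF F u p') (hq' : codes phiF F v q') :
    p ≠ q ∧ p' ≠ q' ∧
    ∀ n : ℕ, SepNum phiE E x y n → 1 ≤ n ∧
      ∀ m : ℕ, SepNum phiF F u v m → (n : ℤ) - 1 ≤ (m : ℤ) ∧ (m : ℤ) ≤ (n : ℤ) + 2 := by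
  rcases h1 with h1 | h1
  · obtain ⟨hx0, hy0⟩ := Prod.mk.inj h1
    exact ordered_case hE hF hx hy hx0 hy0 hu hv hp hq hp' hq'
  · obtain ⟨hx0, hy0⟩ := Prod.mk.inj h1
    obtain ⟨hpq, hpq', h⟩ := ordered_case hE hF hy hx hy0 hx0 hv hu hq hp hq' hp'
    refine ⟨hpq.symm, hpq'.symm, fun n hn => ?_⟩
    obtain ⟨hn1, hm⟩ := h n (sepNum_comm hn)
    exact ⟨hn1, fun m hm' => hm m (sepNum_comm hm')⟩
end

section
/- Let 𝒥 be the set of finite words J over {1,…,5} such that J ends with the two-letter block 41 and the block 41 occurs in J only as its final two letters. Then the cylinders E_J = φ^E_J(E) for J ∈ 𝒥 are pairwise H^s-disjoint, i.e., H^s(E_J ∩ E_{J'}) = 0 for distinct J, J' ∈ 𝒥, and for every finite word I over {1,…,5} one has H^s(φ^E_I(E)) = ∑_{J ∈ 𝒥} H^s(φ^E_{IJ}(E)), where IJ denotes the concatenation of I and J. -/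
/-!
The proof rests on two facts: every `phiE j` scales `μH[sDim]` by `1/5` (`hm_phi`), and
`μH[sDim] E` is finite (`hm_finite`), by covering `E` with its `5 ^ n` cylinders of level `n`.
Positivity of `μH[sDim] E` is not needed.

*Disjointness.* Since `E` is the union of its five first-level cylinders, whose measures add up to
the finite number `μH[sDim] E`, these cylinders overlap in null sets (`first_null`). Two distinct
words of `Jset` are never prefixes of each other, so their cylinders lie, after a common prefix, in
two distinct first-level cylinders.

*Sum formula.* Let `N` be the part of `E` that no cylinder `E_J`, `J ∈ Jset`, covers. Every word
containing the block `41` has a prefix in `Jset` (`exists_prefix`), so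
`N ⊆ ⋃ φ_a (φ_b N)`, the union over the 24 pairs `(a, b) ≠ (4, 1)`. Hence
`μH[sDim] N ≤ 24/25 * μH[sDim] N`, and `N` is null. So the cylinders `E_J` exhaust `E` up to a
null set; applying `φ_I` rescales both sides by the same factor.
-/

open MeasureTheory

/-- The set `𝒥` of finite words over `{1,…,5}` that end with the block `41` and in
which the block `41` occurs only as the final two letters. -/
def Jset : Set (List Letter) :=
  {J | 2 ≤ J.length ∧ J.getD (J.length - 2) l1 = l4 ∧ J.getD (J.length - 1) l1 = l1 ∧
    ∀ i, i + 2 < J.length → ¬(J.getD i l1 = l4 ∧ J.getD (i + 1) l1 = l1)}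

open scoped ENNReal NNReal Pointwise

/-! ### Scaling of the Hausdorff measure -/

lemma sDim_pos : 0 < sDim := div_pos (Real.log_pos (by norm_num)) (Real.log_pos (by norm_num))

lemma three_rpow : (3 : ℝ) ^ sDim = 5 := by
  rw [Real.rpow_def_of_pos (by norm_num), sDim, mul_div_cancel₀]
  · exact Real.exp_log (by norm_num)
  · exact (Real.log_pos (by norm_num)).ne'

lemma third_rpow : ((3 : ℝ≥0)⁻¹) ^ sDim = 5⁻¹ := by
  rw [NNReal.inv_rpow]
  congr 1
  apply NNReal.coe_injective
  push_cast
  exact three_rpow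

lemma third_rpow' : ((3 : ℝ≥0∞)⁻¹) ^ sDim = 5⁻¹ := by
  have h := third_rpow
  have h2 : ((3 : ℝ≥0∞)⁻¹) = ((3⁻¹ : ℝ≥0) : ℝ≥0∞) := by
    rw [ENNReal.coe_inv (by norm_num)]; rfl
  rw [h2, ← ENNReal.coe_rpow_of_nonneg _ sDim_pos.le, h, ENNReal.coe_inv (by norm_num)]
  rfl

lemma phi_image (j : Letter) (A : Set ℂ) :
    phiE j '' A = (3⁻¹ : ℝ) • (IsometryEquiv.addRight (dE j) '' A) := by
  rw [← Set.image_smul, Set.image_image]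
  apply Set.image_congr
  intro z _
  simp [phiE, Complex.real_smul]
  ring

lemma hm_phi (j : Letter) (A : Set ℂ) : μH[sDim] (phiE j '' A) = 5⁻¹ * μH[sDim] A := by
  rw [phi_image, Measure.hausdorffMeasure_smul₀ sDim_pos.le (by norm_num),
    IsometryEquiv.hausdorffMeasure_image]
  have h : ‖(3⁻¹ : ℝ)‖₊ = 3⁻¹ := by simp
  rw [h, third_rpow, ENNReal.smul_def, ENNReal.coe_inv (by norm_num)]
  rfl

lemma iter_append (u v : List Letter) (z : ℂ) :
    iterPhi phiE (u ++ v) z = iterPhi phiE u (iterPhi phiE v z) := by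
  induction u with
  | nil => rfl
  | cons a u ih => simp [iterPhi, ih]

lemma iter_append_image (u v : List Letter) (A : Set ℂ) :
    iterPhi phiE (u ++ v) '' A = iterPhi phiE u '' (iterPhi phiE v '' A) := by
  rw [Set.image_image]
  exact Set.image_congr fun z _ => iter_append u v z

lemma iter_cons_image (a : Letter) (v : List Letter) (A : Set ℂ) :
    iterPhi phiE (a :: v) '' A = phiE a '' (iterPhi phiE v '' A) :=
  iter_append_image [a] v A

lemma hm_iter (w : List Letter) (A : Set ℂ) :
    μH[sDim] (iterPhi phiE w '' A) = 5⁻¹ ^ w.length * μH[sDim] A := by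
  induction w with
  | nil => simp [iterPhi]
  | cons a w ih => rw [iter_cons_image, hm_phi, ih, List.length_cons, pow_succ]; ring

lemma phi_inj (j : Letter) : Function.Injective (phiE j) := by
  intro x y h
  simpa [phiE] using h

lemma iter_inj (w : List Letter) : Function.Injective (iterPhi phiE w) := by
  induction w with
  | nil => exact Function.injective_id
  | cons a w ih => exact (phi_inj a).comp ih

lemma iter_cont (w : List Letter) : Continuous (iterPhi phiE w) := by
  induction w with
  | nil => exact continuous_id
  | cons a w ih =>
    have : Continuous (phiE a) := by unfold phiE; fun_prop
    exact this.comp ih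

lemma phi_ediam (j : Letter) (A : Set ℂ) :
    Metric.ediam (phiE j '' A) = 3⁻¹ * Metric.ediam A := by
  rw [phi_image, ediam_smul₀, IsometryEquiv.ediam_image]
  have h : ‖(3⁻¹ : ℝ)‖₊ = 3⁻¹ := by simp
  rw [h, ENNReal.smul_def, ENNReal.coe_inv (by norm_num)]
  rfl

lemma iter_ediam (w : List Letter) (A : Set ℂ) :
    Metric.ediam (iterPhi phiE w '' A) = 3⁻¹ ^ w.length * Metric.ediam A := by
  induction w with
  | nil => simp [iterPhi]
  | cons a w ih => rw [iter_cons_image, phi_ediam, ih, List.length_cons, pow_succ]; ring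

/-! ### Finiteness of the measure and null overlaps -/

section Attractor

variable {E : Set ℂ}

lemma phi_sub (hE : IsAttractor phiE E) (j : Letter) : phiE j '' E ⊆ E := by
  conv_rhs => rw [hE.2.2]
  exact Set.subset_iUnion (fun j => phiE j '' E) j

lemma iter_sub (hE : IsAttractor phiE E) (w : List Letter) : iterPhi phiE w '' E ⊆ E := by
  induction w with
  | nil => simp [iterPhi]
  | cons a w ih =>
    rw [iter_cons_image]
    exact (Set.image_mono ih).trans (phi_sub hE a)

lemma exists_phi (hE : IsAttractor phiE E) {p : ℂ} (hp : p ∈ E) :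
    ∃ j, ∃ q ∈ E, phiE j q = p := by
  rw [hE.2.2] at hp
  simpa using hp

lemma cover (hE : IsAttractor phiE E) (n : ℕ) :
    E ⊆ ⋃ w : Fin n → Letter, iterPhi phiE (List.ofFn w) '' E := by
  induction n with
  | zero =>
    intro p hp
    exact Set.mem_iUnion.2 ⟨Fin.elim0, by simpa [iterPhi] using hp⟩
  | succ n ih =>
    intro p hp
    obtain ⟨j, q, hq, rfl⟩ := exists_phi hE hp
    obtain ⟨w, hw⟩ := Set.mem_iUnion.1 (ih hq)
    refine Set.mem_iUnion.2 ⟨Fin.cons j w, ?_⟩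
    rw [List.ofFn_cons, iter_cons_image]
    exact Set.mem_image_of_mem _ hw

/-- The `5 ^ n` cylinders of level `n` have diameter `3⁻¹ ^ n * diam E`, so their `sDim`-th powers
add up to `(diam E) ^ sDim` for every `n`. -/
lemma hm_finite (hE : IsAttractor phiE E) : μH[sDim] E ≠ ∞ := by
  have hD : Metric.ediam E ≠ ∞ := hE.2.1.isBounded.ediam_ne_top
  have hr : Filter.Tendsto (fun n : ℕ => (3⁻¹ : ℝ≥0∞) ^ n * Metric.ediam E)
      Filter.atTop (nhds 0) := by
    have h0 : Filter.Tendsto (fun n : ℕ => (3⁻¹ : ℝ≥0∞) ^ n) Filter.atTop (nhds 0) :=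
      ENNReal.tendsto_pow_atTop_nhds_zero_of_lt_one (by simp)
    simpa using ENNReal.Tendsto.mul_const h0 (Or.inr hD)
  have key := Measure.hausdorffMeasure_le_liminf_sum (ι := fun n : ℕ => Fin n → Letter) sDim E
    (fun n : ℕ => (3⁻¹ : ℝ≥0∞) ^ n * Metric.ediam E) hr
    (fun n w => iterPhi phiE (List.ofFn w) '' E)
    (Filter.Eventually.of_forall fun n w => by rw [iter_ediam, List.length_ofFn])
    (Filter.Eventually.of_forall fun n => cover hE n)
  have hsum : ∀ n : ℕ, (∑ w : Fin n → Letter,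
      Metric.ediam (iterPhi phiE (List.ofFn w) '' E) ^ sDim) = Metric.ediam E ^ sDim := by
    intro n
    have hterm : ∀ w : Fin n → Letter, Metric.ediam (iterPhi phiE (List.ofFn w) '' E) ^ sDim
        = 5⁻¹ ^ n * Metric.ediam E ^ sDim := by
      intro w
      rw [iter_ediam, List.length_ofFn, ENNReal.mul_rpow_of_nonneg _ _ sDim_pos.le,
        ← third_rpow', ← ENNReal.rpow_natCast, ← ENNReal.rpow_natCast, ← ENNReal.rpow_mul,
        ← ENNReal.rpow_mul, mul_comm (n : ℝ)]
    rw [Finset.sum_congr rfl fun w _ => hterm w, Finset.sum_const, Finset.card_univ,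
      Fintype.card_fun, Fintype.card_fin, Fintype.card_fin, nsmul_eq_mul, ← mul_assoc]
    push_cast
    rw [← mul_pow, ENNReal.mul_inv_cancel (by norm_num) (by norm_num), one_pow, one_mul]
  simp only [hsum, Filter.liminf_const] at key
  exact ne_top_of_le_ne_top (ENNReal.rpow_ne_top_of_nonneg sDim_pos.le hD) key

lemma cyl_meas (hE : IsAttractor phiE E) (w : List Letter) :
    MeasurableSet (iterPhi phiE w '' E) :=
  (hE.2.1.image (iter_cont w)).isClosed.measurableSet

/-- If two of the five pieces overlapped in positive measure, the measures of the pieces, which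
add up to `μH[sDim] E < ∞`, would exceed the measure of their union `E`. -/
lemma first_null (hE : IsAttractor phiE E) {a b : Letter} (hab : a ≠ b) :
    μH[sDim] (phiE a '' E ∩ phiE b '' E) = 0 := by
  have hfin := hm_finite hE
  set X : Set ℂ := phiE a '' E with hX
  set Y : Set ℂ := phiE b '' E with hY
  have hYm : MeasurableSet Y := cyl_meas hE [b]
  set M := μH[sDim] E with hM
  have hu : M ≤ μH[sDim] (X ∪ Y) + 3 * (5⁻¹ * M) := by
    have hsub : E ⊆ (X ∪ Y) ∪ ⋃ j ∈ (Finset.univ.erase a).erase b, phiE j '' E := by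
      intro p hp
      obtain ⟨j, q, hq, rfl⟩ := exists_phi hE hp
      by_cases hja : j = a
      · subst hja; exact Or.inl (Or.inl ⟨q, hq, rfl⟩)
      by_cases hjb : j = b
      · subst hjb; exact Or.inl (Or.inr ⟨q, hq, rfl⟩)
      refine Or.inr ?_
      simp only [Set.mem_iUnion]
      exact ⟨j, by simp [hja, hjb], q, hq, rfl⟩
    refine (measure_mono hsub).trans ((measure_union_le _ _).trans ?_)
    gcongr
    refine (measure_biUnion_finset_le _ _).trans ?_
    rw [Finset.sum_congr rfl fun j _ => hm_phi j E, Finset.sum_const,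
      Finset.card_erase_of_mem (by simp [hab.symm]), Finset.card_erase_of_mem (by simp)]
    simp [hM]
  have hi := measure_union_add_inter (μ := μH[sDim]) X hYm
  rw [hX, hY, hm_phi a E, hm_phi b E, ← hX, ← hY, ← hM] at hi
  have h5 : 5 * (5⁻¹ * M) = M := by
    rw [← mul_assoc, ENNReal.mul_inv_cancel (by norm_num) (by norm_num), one_mul]
  have hm : 5⁻¹ * M ≠ ∞ := ENNReal.mul_ne_top (by simp) hfin
  have hle : M + μH[sDim] (X ∩ Y) ≤ M + 0 := by
    calc M + μH[sDim] (X ∩ Y) ≤ μH[sDim] (X ∪ Y) + 3 * (5⁻¹ * M) + μH[sDim] (X ∩ Y) := by gcongr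
      _ = (μH[sDim] (X ∪ Y) + μH[sDim] (X ∩ Y)) + 3 * (5⁻¹ * M) := by ring
      _ = 5 * (5⁻¹ * M) := by rw [hi]; ring
      _ = M + 0 := by rw [h5, add_zero]
  exact nonpos_iff_eq_zero.1 ((ENNReal.add_le_add_iff_left hfin).1 hle)

/-! ### Words of `Jset` -/

lemma prefix_or_split (u v : List Letter) : u <+: v ∨ v <+: u ∨
    ∃ P a b u' v', a ≠ b ∧ u = P ++ a :: u' ∧ v = P ++ b :: v' := by
  induction u generalizing v with
  | nil => exact Or.inl List.nil_prefix
  | cons a u ih =>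
    cases v with
    | nil => exact Or.inr (Or.inl List.nil_prefix)
    | cons b v =>
      by_cases hab : a = b
      · subst hab
        rcases ih v with h | h | ⟨P, c, d, u', v', hcd, rfl, rfl⟩
        · exact Or.inl (by simpa using h)
        · exact Or.inr (Or.inl (by simpa using h))
        · exact Or.inr (Or.inr ⟨a :: P, c, d, u', v', hcd, rfl, rfl⟩)
      · exact Or.inr (Or.inr ⟨[], a, b, u, v, hab, rfl, rfl⟩)

lemma Jset_prefix {J J' : List Letter} (hJ : J ∈ Jset) (hJ' : J' ∈ Jset) (h : J <+: J') :
    J = J' := by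
  obtain ⟨t, rfl⟩ := h
  cases t with
  | nil => simp
  | cons c t =>
    obtain ⟨h2, h4, h1, -⟩ := hJ
    obtain ⟨-, -, -, hno⟩ := hJ'
    refine absurd ⟨?_, ?_⟩ (hno (J.length - 2) (by simp; omega))
    · rwa [List.getD_append _ _ _ _ (by omega)]
    · rw [List.getD_append _ _ _ _ (by omega)]
      rwa [show J.length - 2 + 1 = J.length - 1 by omega]

/-- A word containing the block `41` has a prefix in `Jset`: cut it after the first `41`. -/
lemma exists_prefix (w : List Letter)
    (h : ∃ i, i + 1 < w.length ∧ w.getD i l1 = l4 ∧ w.getD (i + 1) l1 = l1) :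
    ∃ J ∈ Jset, J <+: w := by
  classical
  set i := Nat.find h with hi
  obtain ⟨hlt, h4, h1⟩ := Nat.find_spec h
  rw [← hi] at hlt h4 h1
  have hlen : (w.take (i + 2)).length = i + 2 := by rw [List.length_take]; omega
  have hget : ∀ k, k < i + 2 → (w.take (i + 2)).getD k l1 = w.getD k l1 := by
    intro k hk
    simp [List.getD_eq_getElem?_getD, hk]
  refine ⟨w.take (i + 2), ⟨by omega, ?_, ?_, ?_⟩, List.take_prefix _ _⟩
  · rw [hlen, hget _ (by omega)]; exact h4
  · rw [hlen, hget _ (by omega)]; exact h1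
  · intro k hk
    rw [hlen] at hk
    rw [hget _ (by omega), hget _ (by omega)]
    rintro ⟨ha, hb⟩
    exact Nat.find_min h (m := k) (by omega) ⟨by omega, ha, hb⟩

lemma J_disjoint (hE : IsAttractor phiE E) {J J' : List Letter} (hJ : J ∈ Jset)
    (hJ' : J' ∈ Jset) (hne : J ≠ J') :
    μH[sDim] (iterPhi phiE J '' E ∩ iterPhi phiE J' '' E) = 0 := by
  rcases prefix_or_split J J' with h | h | ⟨P, a, b, u, v, hab, rfl, rfl⟩
  · exact absurd (Jset_prefix hJ hJ' h) hne
  · exact absurd (Jset_prefix hJ' hJ h).symm hne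
  · rw [iter_append_image, iter_append_image, ← Set.image_inter (iter_inj P), hm_iter,
      iter_cons_image, iter_cons_image]
    have h0 := measure_mono_null (Set.inter_subset_inter
      (Set.image_mono (f := phiE a) (iter_sub hE u))
      (Set.image_mono (f := phiE b) (iter_sub hE v))) (first_null hE hab)
    rw [h0, mul_zero]

/-! ### The cylinders of `Jset` exhaust `E` -/

/-- If a point `φ_a (φ_b q)` of the uncovered part has `q ∈ E_J`, then the word `abJ` contains
`41`, hence has a prefix in `Jset`, a contradiction. So the uncovered part `N` satisfies
`N ⊆ ⋃ φ_a (φ_b N)` over the pairs `(a, b) ≠ (4, 1)`, and `25 * μH N ≤ 24 * μH N < ∞`. -/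
lemma rest_null (hE : IsAttractor phiE E) :
    μH[sDim] (E \ ⋃ J : Jset, iterPhi phiE (J : List Letter) '' E) = 0 := by
  set N := E \ ⋃ J : Jset, iterPhi phiE (J : List Letter) '' E with hN
  have hfin : μH[sDim] N ≠ ∞ :=
    ne_top_of_le_ne_top (hm_finite hE) (measure_mono Set.sdiff_subset)
  -- a point lying in the cylinder of a word that contains `41` is covered
  have hcov : ∀ (w : List Letter), (∃ i, i + 1 < w.length ∧ w.getD i l1 = l4 ∧
      w.getD (i + 1) l1 = l1) → ∀ q ∈ E, iterPhi phiE w q ∉ N := by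
    intro w hw q hq hmem
    obtain ⟨J, hJ, t, rfl⟩ := exists_prefix w hw
    refine hmem.2 (Set.mem_iUnion.2 ⟨⟨J, hJ⟩, iterPhi phiE t q, ?_, (iter_append J t q).symm⟩)
    exact iter_sub hE t ⟨q, hq, rfl⟩
  have hsub : N ⊆ ⋃ ab ∈ (Finset.univ : Finset (Letter × Letter)).erase (l4, l1),
      iterPhi phiE [ab.1, ab.2] '' N := by
    intro p hp
    obtain ⟨a, q, hq, rfl⟩ := exists_phi hE hp.1
    obtain ⟨b, r, hr, rfl⟩ := exists_phi hE hq
    have hab : (a, b) ≠ (l4, l1) := by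
      intro h
      obtain ⟨rfl, rfl⟩ := Prod.mk.inj h
      exact hcov [l4, l1] ⟨0, by simp, by simp, by simp⟩ r hr hp
    have hrN : r ∈ N := by
      refine ⟨hr, fun hmem => ?_⟩
      obtain ⟨⟨J, hJ⟩, z, hz, rfl⟩ := Set.mem_iUnion.1 hmem
      have hp' : iterPhi phiE (a :: b :: J) z ∈ N := hp
      obtain ⟨h2, h4, h1, -⟩ := hJ
      refine hcov (a :: b :: J) ⟨J.length, by simp, ?_, ?_⟩ z hz hp'
      · obtain ⟨m, hm⟩ : ∃ m, J.length = m + 2 := ⟨J.length - 2, by omega⟩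
        rw [hm] at h4 ⊢
        simpa using h4
      · obtain ⟨m, hm⟩ : ∃ m, J.length = m + 1 := ⟨J.length - 1, by omega⟩
        rw [hm] at h1 ⊢
        simpa using h1
    simp only [Set.mem_iUnion]
    exact ⟨(a, b), by simp [hab], r, hrN, rfl⟩
  have hle : μH[sDim] N ≤ 24 * (5⁻¹ ^ 2 * μH[sDim] N) := by
    refine (measure_mono hsub).trans ((measure_biUnion_finset_le _ _).trans ?_)
    rw [Finset.sum_congr rfl fun ab _ => (hm_iter [ab.1, ab.2] N).trans (show _ = 5⁻¹ ^ 2 * μH[sDim] N from rfl),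
      Finset.sum_const,
      Finset.card_erase_of_mem (by simp)]
    simp
  have h25 : 25 * (5⁻¹ ^ 2 * μH[sDim] N) = μH[sDim] N := by
    rw [← mul_assoc, show (25 : ℝ≥0∞) = 5 ^ 2 by norm_num, ← mul_pow,
      ENNReal.mul_inv_cancel (by norm_num) (by norm_num), one_pow, one_mul]
  set m := 5⁻¹ ^ 2 * μH[sDim] N with hm
  have hmfin : m ≠ ∞ := ENNReal.mul_ne_top (by simp) hfin
  have hm0 : 24 * m + m ≤ 24 * m + 0 := by
    calc 24 * m + m = 25 * m := by ring
      _ ≤ 24 * m + 0 := by rw [h25, add_zero]; exact hle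
  have : m = 0 := nonpos_iff_eq_zero.1
    ((ENNReal.add_le_add_iff_left (ENNReal.mul_ne_top (by simp) hmfin)).1 hm0)
  rw [← h25, this, mul_zero]

lemma sum_J (hE : IsAttractor phiE E) :
    μH[sDim] E = ∑' J : Jset, μH[sDim] (iterPhi phiE (J : List Letter) '' E) := by
  have hU : (⋃ J : Jset, iterPhi phiE (J : List Letter) '' E) ⊆ E :=
    Set.iUnion_subset fun J => iter_sub hE J
  rw [← measure_iUnion₀ (fun J J' h => J_disjoint hE J.2 J'.2 (fun h' => h (Subtype.ext h')))
    (fun J => (cyl_meas hE J).nullMeasurableSet)]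
  refine le_antisymm ?_ (measure_mono hU)
  have h := measure_le_inter_add_sdiff μH[sDim] E
    (⋃ J : Jset, iterPhi phiE (J : List Letter) '' E)
  rw [rest_null hE, add_zero, Set.inter_eq_right.2 hU] at h
  exact h

end Attractor

/-- The cylinders `E_J = φ^E_J(E)`, `J ∈ 𝒥`, are pairwise
`H^s`-disjoint, and for every finite word `I`,
`H^s(φ^E_I(E)) = ∑_{J ∈ 𝒥} H^s(φ^E_{IJ}(E))`. -/
theorem stmt19 (E : Set ℂ) (hE : IsAttractor phiE E) :
    (∀ J ∈ Jset, ∀ J' ∈ Jset, J ≠ J' →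
      μH[sDim] (iterPhi phiE J '' E ∩ iterPhi phiE J' '' E) = 0) ∧
    (∀ I : List Letter,
      μH[sDim] (iterPhi phiE I '' E) =
        ∑' J : Jset, μH[sDim] (iterPhi phiE (I ++ (J : List Letter)) '' E)) := by
  refine ⟨fun J hJ J' hJ' hne => J_disjoint hE hJ hJ' hne, fun I => ?_⟩
  simp_rw [iter_append_image, hm_iter I]
  rw [ENNReal.tsum_mul_left, ← sum_J hE]
end
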